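/- For every ε > 0 there exists C_ε > 0 with the following property. For all dyadic N, N₁, N₂, N₃ ≥ 1 and all m ∈ ℤ, the cardinality of S^{𝐍,(m)} satisfies |S^{𝐍,(m)}| ≤ C_ε · min( N₁² N₃² (min(N, N₂))^ε, N² N₂² (min(N₁, N₃))^ε, (min(N, N₂))² (N₁ N₃)^{1+ε}, (min(N₁, N₃))² (N N₂)^{1+ε} ), uniformly in m ∈ ℤ. -/

import Mathlib

/-- Euclidean norm of a lattice point in `ℤ²`. -/
noncomputable def znorm (n : ℤ × ℤ) : ℝ := Real.sqrt ((n.1 : ℝ) ^ 2 + (n.2 : ℝ) ^ 2)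

/-- Squared Euclidean norm `|n|²` of `n ∈ ℤ²`, as an integer. -/
def nsq (n : ℤ × ℤ) : ℤ := n.1 ^ 2 + n.2 ^ 2

/-- `φ(n̄) = |n|² − |n₁|² + |n₂|² − |n₃|²`. -/
def phiFn (n n₁ n₂ n₃ : ℤ × ℤ) : ℤ := nsq n - nsq n₁ + nsq n₂ - nsq n₃

/-- `N` is a dyadic number: `N = 2^k` for some integer `k ≥ 0`. -/
def IsDyadic (N : ℝ) : Prop := ∃ k : ℕ, N = 2 ^ k

/-- `|n| ∼ N`: for dyadic `N ≥ 2` this means `N/2 < |n| ≤ N`; for `N = 1` it means `|n| ≤ 1`. -/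
def simDyadic (N : ℝ) (n : ℤ × ℤ) : Prop :=
  (N = 1 ∧ znorm n ≤ 1) ∨ (N ≠ 1 ∧ N / 2 < znorm n ∧ znorm n ≤ N)

/-- Membership in the set `S^{𝐍,(m)}`. -/
def SMem (N N₁ N₂ N₃ : ℝ) (m : ℤ) (n n₁ n₂ n₃ : ℤ × ℤ) : Prop :=
  n = n₁ - n₂ + n₃ ∧ n ≠ n₁ ∧ n ≠ n₃ ∧ phiFn n n₁ n₂ n₃ = m ∧
    simDyadic N n ∧ simDyadic N₁ n₁ ∧ simDyadic N₂ n₂ ∧ simDyadic N₃ n₃ 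

/-!
For a quadruple with `n = n₁ - n₂ + n₃` one has `φ = 2 (n - n₁) · (n - n₃)`. Once `n₁` and `n₃`
are fixed, `w = (n - n₁) + (n - n₃)` satisfies `|w|² = |n₃ - n₁|² + 2 φ`, so it lies on a circle.
Once `n` is fixed, the two differences are nonzero vectors with prescribed dot product; fixing
their first coordinates puts the second coordinates on a hyperbola, up to degenerate cases.
So it suffices to bound by `O(R ^ ε)` the number of lattice points of a conic `|z|² = k` or
`x y = k`, `k ≠ 0`, in a ball of radius `R` with any centre. The divisor bound, for integers or for
Gaussian integers, gives `O(|k| ^ ε)`; and if the ball contains three points of the conic, then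
`k` divides a nonzero integer built from their differences, so `|k|` is at most a power of `R`.
The symmetries `n ↔ n₂` and `(n, n₂) ↔ (n₁, n₃)` yield the remaining bounds.
-/

theorem exists_mul_add_one_pow_le_mul_pow (K : ℝ) (j : ℕ) {r : ℝ} (hr : 1 < r) :
    ∃ D : ℝ, 1 ≤ D ∧ ∀ e : ℕ, K * ((e : ℝ) + 1) ^ j ≤ D * r ^ e := by
  have hO := ((isLittleO_pow_const_const_pow_of_one_lt (R := ℝ) j hr).isBigO).const_mul_left K
  obtain ⟨B, -, hbound⟩ := Asymptotics.bound_of_isBigO_nat_atTop hO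
  refine ⟨max (B * r) 1, le_max_right _ _, fun e => ?_⟩
  have hr0 : 0 < r := one_pos.trans hr
  have hshift := hbound (x := e + 1) (by positivity)
  calc K * ((e : ℝ) + 1) ^ j ≤ ‖K * ((e + 1 : ℕ) : ℝ) ^ j‖ := by
        push_cast; exact Real.le_norm_self _
    _ ≤ B * r ^ (e + 1) := by simpa [abs_of_pos hr0] using hshift
    _ = B * r * r ^ e := by ring
    _ ≤ max (B * r) 1 * r ^ e := by gcongr; exact le_max_left _ _

section Submultiplicative

variable {f : ℕ → ℝ} {ε : ℝ}

theorem le_prod_mul_rpow_of_prime_pow_le (hf : ∀ n, 0 ≤ f n)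
    (hmul : ∀ a b, a.Coprime b → f (a * b) ≤ f a * f b) {w : ℕ → ℝ} (hw : ∀ p, 0 ≤ w p)
    (hpow : ∀ p e : ℕ, p.Prime → 0 < e → f (p ^ e) ≤ w p * ((p ^ e : ℕ) : ℝ) ^ ε)
    {n : ℕ} (hn : 1 < n) : f n ≤ (∏ p ∈ n.primeFactors, w p) * (n : ℝ) ^ ε := by
  induction n using Nat.recOnPosPrimePosCoprime with
  | zero => omega
  | one => omega
  | prime_pow p e hp he =>
    rw [Nat.primeFactors_prime_pow he.ne' hp, Finset.prod_singleton]
    exact hpow p e hp he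
  | coprime x y hx hy hxy ihx ihy =>
    rw [hxy.primeFactors_mul, Finset.prod_union hxy.disjoint_primeFactors, Nat.cast_mul,
      Real.mul_rpow x.cast_nonneg y.cast_nonneg]
    calc f (x * y) ≤ f x * f y := hmul x y hxy
      _ ≤ _ := mul_le_mul (ihx hx) (ihy hy) (hf y)
          (mul_nonneg (Finset.prod_nonneg fun p _ => hw p) (by positivity))
      _ = _ := by ring

-- Only the finitely many primes with `p ^ ε < D * 2 ^ ε` cost a factor `D`; for every larger
-- prime, `D` is absorbed into `p ^ ε`.
open Filter in
theorem exists_le_mul_rpow_of_prime_pow_le_mul_pow (hf : ∀ n, 0 ≤ f n)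
    (hmul : ∀ a b, a.Coprime b → f (a * b) ≤ f a * f b) (hε : 0 < ε) {D : ℝ} (hD : 1 ≤ D)
    (hpow : ∀ p e : ℕ, p.Prime → f (p ^ e) ≤ D * (2 ^ ε) ^ e) :
    ∃ C : ℝ, 0 < C ∧ ∀ n : ℕ, n ≠ 0 → f n ≤ C * (n : ℝ) ^ ε := by
  obtain ⟨P, hP⟩ := eventually_atTop.1 (((tendsto_rpow_atTop hε).comp
    tendsto_natCast_atTop_atTop).eventually_ge_atTop (D * 2 ^ ε))
  let w : ℕ → ℝ := fun p => if p < P then D else 1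
  have hw : ∀ p, 0 ≤ w p := fun p => by dsimp only [w]; split_ifs <;> positivity
  have prime_pow_le : ∀ p e : ℕ, p.Prime → 0 < e →
      f (p ^ e) ≤ w p * ((p ^ e : ℕ) : ℝ) ^ ε := by
    intro p e hp he
    rw [Nat.cast_pow, ← Real.rpow_pow_comm p.cast_nonneg]
    refine (hpow p e hp).trans ?_
    by_cases hpP : p < P
    · have h2p : (2 : ℝ) ≤ p := by exact_mod_cast hp.two_le
      simp only [w, if_pos hpP]
      gcongr
    · calc D * (2 ^ ε) ^ e ≤ D ^ e * (2 ^ ε) ^ e := by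
            gcongr; exact le_self_pow₀ hD he.ne'
        _ = (D * 2 ^ ε) ^ e := (mul_pow _ _ _).symm
        _ ≤ ((p : ℝ) ^ ε) ^ e := by gcongr; exact hP p (not_lt.1 hpP)
        _ = w p * ((p : ℝ) ^ ε) ^ e := by simp only [w, if_neg hpP, one_mul]
  have prod_le (n : ℕ) : ∏ p ∈ n.primeFactors, w p ≤ D ^ P := by
    rw [← Finset.prod_filter, Finset.prod_const]
    have hsub : {p ∈ n.primeFactors | p < P} ⊆ Finset.range P := fun p hp =>
      Finset.mem_range.2 (Finset.mem_filter.1 hp).2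
    exact pow_le_pow_right₀ hD ((Finset.card_le_card hsub).trans (Finset.card_range P).le)
  refine ⟨D ^ (P + 1), by positivity, fun n hn => ?_⟩
  obtain rfl | hn1 : n = 1 ∨ 1 < n := by omega
  · have hf1 : f 1 ≤ D := by simpa using hpow 2 0 Nat.prime_two
    simpa using hf1.trans (le_self_pow₀ hD P.succ_ne_zero)
  · refine (le_prod_mul_rpow_of_prime_pow_le hf hmul hw prime_pow_le hn1).trans ?_
    gcongr
    exact (prod_le n).trans (pow_le_pow_right₀ hD P.le_succ)

theorem exists_le_mul_rpow_of_prime_pow_le_mul_add_one_pow (hf : ∀ n, 0 ≤ f n)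
    (hmul : ∀ a b, a.Coprime b → f (a * b) ≤ f a * f b) (K : ℝ) (j : ℕ)
    (hpow : ∀ p e : ℕ, p.Prime → f (p ^ e) ≤ K * ((e : ℝ) + 1) ^ j) (hε : 0 < ε) :
    ∃ C : ℝ, 0 < C ∧ ∀ n : ℕ, n ≠ 0 → f n ≤ C * (n : ℝ) ^ ε := by
  obtain ⟨D, hD, hKD⟩ := exists_mul_add_one_pow_le_mul_pow K j
    (Real.one_lt_rpow one_lt_two hε)
  exact exists_le_mul_rpow_of_prime_pow_le_mul_pow hf hmul hε hD
    fun p e hp => (hpow p e hp).trans (hKD e)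

end Submultiplicative

theorem exists_card_divisors_le_mul_rpow {ε : ℝ} (hε : 0 < ε) :
    ∃ C : ℝ, 0 < C ∧ ∀ n : ℕ, n ≠ 0 → (n.divisors.card : ℝ) ≤ C * (n : ℝ) ^ ε := by
  refine exists_le_mul_rpow_of_prime_pow_le_mul_add_one_pow (fun n => Nat.cast_nonneg _)
    (fun a b hab => ?_) 1 1 (fun p e hp => ?_) hε
  · rw [hab.card_divisors_mul, Nat.cast_mul]
  · simp [Nat.divisors_prime_pow hp]

/-- The Gaussian integers of norm `k`, that is, the representations of `k` as a sum of two
squares, counted through unique factorization in `ℤ[i]`. -/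
def gaussianCircle (k : ℕ) : Set GaussianInt := {z | z.norm = k}

theorem finite_gaussianCircle (k : ℕ) : (gaussianCircle k).Finite := by
  refine ((Set.finite_Icc (-(k : ℤ)) k).prod (Set.finite_Icc (-(k : ℤ)) k)).of_injOn
    (f := fun z : GaussianInt => (z.re, z.im)) (fun z hz => ?_) fun z _ w _ h => ?_
  · have hz : z.re ^ 2 + z.im ^ 2 = k := by
      rw [← show z.norm = k from hz, Zsqrtd.norm_def]; ring
    have hre : |z.re| ≤ k := (Int.le_self_sq _).trans (by rw [sq_abs]; nlinarith [sq_nonneg z.im])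
    have him : |z.im| ≤ k := (Int.le_self_sq _).trans (by rw [sq_abs]; nlinarith [sq_nonneg z.re])
    exact ⟨abs_le.1 hre, abs_le.1 him⟩
  · exact Zsqrtd.ext (congrArg Prod.fst h) (congrArg Prod.snd h)

theorem eq_of_mul_eq_mul_of_coprime {a b c d : ℕ} (hc : c.Coprime b) (hd : d.Coprime a)
    (h : c * d = a * b) : c = a :=
  Nat.dvd_antisymm (hc.dvd_of_dvd_mul_right (h ▸ Nat.dvd_mul_right c d))
    (hd.symm.dvd_of_dvd_mul_right (h.symm ▸ Nat.dvd_mul_right a b))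

theorem norm_natAbs_coprime_of_dvd_natCast {z : GaussianInt} {a b : ℕ} (hz : z ∣ a)
    (hab : a.Coprime b) : z.norm.natAbs.Coprime b := by
  obtain ⟨w, hw⟩ := hz
  have hnorm : z.norm * w.norm = a * a := by rw [← Zsqrtd.norm_mul, ← hw, Zsqrtd.norm_natCast]
  have hdvd : z.norm.natAbs ∣ a * a :=
    Int.natCast_dvd_natCast.1 (Int.natAbs_dvd.2 ⟨w.norm, by rw [hnorm]; push_cast; rfl⟩)
  exact (hab.mul_left hab).coprime_dvd_left hdvd

theorem gaussianCircle_mul_subset {a b : ℕ} (hab : a.Coprime b) :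
    gaussianCircle (a * b) ⊆ (fun q : GaussianInt × GaussianInt => q.1 * q.2) ''
      (gaussianCircle a ×ˢ gaussianCircle b) := by
  intro z (hz : z.norm = _)
  have hdvd : z ∣ (a : GaussianInt) * b :=
    ⟨star z, by rw [← Zsqrtd.norm_eq_mul_conj, hz]; push_cast; rfl⟩
  obtain ⟨x, y, hx, hy, rfl⟩ := exists_dvd_and_dvd_of_dvd_mul hdvd
  have hxb := norm_natAbs_coprime_of_dvd_natCast hx hab
  have hya := norm_natAbs_coprime_of_dvd_natCast hy hab.symm
  have hxy : x.norm.natAbs * y.norm.natAbs = a * b := by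
    rw [← Int.natAbs_mul, ← Zsqrtd.norm_mul, hz, Int.natAbs_natCast]
  refine ⟨(x, y), ⟨?_, ?_⟩, rfl⟩
  · exact (GaussianInt.natCast_natAbs_norm x).symm.trans
      (congrArg Nat.cast (eq_of_mul_eq_mul_of_coprime hxb hya hxy))
  · exact (GaussianInt.natCast_natAbs_norm y).symm.trans
      (congrArg Nat.cast (eq_of_mul_eq_mul_of_coprime hya hxb (by rw [mul_comm, hxy, mul_comm])))

theorem ncard_gaussianCircle_mul_le {a b : ℕ} (hab : a.Coprime b) :
    (gaussianCircle (a * b)).ncard ≤ (gaussianCircle a).ncard * (gaussianCircle b).ncard := by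
  have hfin := (finite_gaussianCircle a).prod (finite_gaussianCircle b)
  rw [← Set.ncard_prod]
  exact (Set.ncard_le_ncard (gaussianCircle_mul_subset hab) (hfin.image _)).trans
    (Set.ncard_image_le hfin)

theorem exists_prime_natCast_dvd_mul_star {p : ℕ} (hp : p.Prime) :
    ∃ π : GaussianInt, Prime π ∧ (p : GaussianInt) ∣ π * star π := by
  have hunit : ¬IsUnit (p : GaussianInt) := by
    rw [Zsqrtd.isUnit_iff_norm_isUnit, Zsqrtd.norm_natCast]
    exact fun h => (Nat.prime_iff_prime_int.1 hp).not_isUnit (isUnit_of_mul_isUnit_left h)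
  obtain ⟨π, hπ, w, hw⟩ :=
    WfDvdMonoid.exists_irreducible_factor hunit (Nat.cast_ne_zero.2 hp.ne_zero)
  refine ⟨π, hπ.prime, ?_⟩
  have hdvd : π.norm.natAbs ∣ p ^ 2 := by
    rw [sq, ← Int.natAbs_natCast (p * p), Int.natAbs_dvd_natAbs, Nat.cast_mul,
      ← Zsqrtd.norm_natCast, hw, Zsqrtd.norm_mul]
    exact dvd_mul_right _ _
  obtain ⟨i, -, hi⟩ := (Nat.dvd_prime_pow hp).1 hdvd
  have hi0 : i ≠ 0 := by
    rintro rfl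
    exact hπ.not_isUnit (Zsqrtd.norm_eq_one_iff.1 hi)
  rw [← Zsqrtd.norm_eq_mul_conj, ← Int.cast_natCast (R := GaussianInt),
    Zsqrtd.intCast_dvd_intCast, ← Int.dvd_natAbs, hi]
  exact_mod_cast dvd_pow_self p hi0

theorem gaussianCircle_prime_pow_subset {p : ℕ} (e : ℕ) {π : GaussianInt} (hπ : Prime π)
    (hp : (p : GaussianInt) ∣ π * star π) :
    gaussianCircle (p ^ e) ⊆ (fun q : GaussianInt × ℕ × ℕ => q.1 * π ^ q.2.1 * star π ^ q.2.2) ''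
      (gaussianCircle 1 ×ˢ Set.Iic e ×ˢ Set.Iic e) := by
  intro z (hz : z.norm = _)
  have hdvd : z ∣ π ^ e * star π ^ e := by
    rw [← mul_pow]
    refine Dvd.dvd.trans ⟨star z, ?_⟩ (pow_dvd_pow_of_dvd hp e)
    rw [← Zsqrtd.norm_eq_mul_conj, hz]
    push_cast; rfl
  have hπ' : Prime (star π) := (MulEquiv.prime_iff (starRingAut (R := GaussianInt))).2 hπ
  obtain ⟨x, y, hx, hy, rfl⟩ := exists_dvd_and_dvd_of_dvd_mul hdvd
  obtain ⟨i, hi, hxi⟩ := (dvd_prime_pow hπ e).1 hx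
  obtain ⟨j, hj, hyj⟩ := (dvd_prime_pow hπ' e).1 hy
  obtain ⟨u, hu⟩ := (hxi.mul_mul hyj).symm
  refine ⟨(u, i, j), ⟨?_, hi, hj⟩, ?_⟩
  · have hu1 : (u : GaussianInt).norm = 1 := (Zsqrtd.norm_eq_one_iff' (by norm_num) _).2 u.isUnit
    simpa [gaussianCircle] using hu1
  · rw [← hu]; ring

theorem ncard_gaussianCircle_prime_pow_le {p : ℕ} (hp : p.Prime) (e : ℕ) :
    (gaussianCircle (p ^ e)).ncard ≤ (gaussianCircle 1).ncard * (e + 1) ^ 2 := by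
  obtain ⟨π, hπ, hdvd⟩ := exists_prime_natCast_dvd_mul_star hp
  have hfin := (finite_gaussianCircle 1).prod ((Set.finite_Iic e).prod (Set.finite_Iic e))
  refine ((Set.ncard_le_ncard (gaussianCircle_prime_pow_subset e hπ hdvd) (hfin.image _)).trans
    (Set.ncard_image_le hfin)).trans_eq ?_
  rw [Set.ncard_prod, Set.ncard_prod, Set.ncard_Iic_nat, sq]

theorem exists_ncard_gaussianCircle_le_mul_rpow {ε : ℝ} (hε : 0 < ε) :
    ∃ C : ℝ, 0 < C ∧ ∀ k : ℕ, k ≠ 0 → ((gaussianCircle k).ncard : ℝ) ≤ C * (k : ℝ) ^ ε :=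
  exists_le_mul_rpow_of_prime_pow_le_mul_add_one_pow (fun _ => Nat.cast_nonneg _)
    (fun _ _ hab => by exact_mod_cast ncard_gaussianCircle_mul_le hab)
    ((gaussianCircle 1).ncard : ℝ) 2
    (fun _ e hp => by exact_mod_cast ncard_gaussianCircle_prime_pow_le hp e) hε

-- For `u = z` and `v = star z` this is the relation `4 * R * area = a * b * c` between the area,
-- the sides and the circumradius of a triangle, squared.
theorem dvd_prod_sub_of_mul_eq {R : Type*} [CommRing R] {u₁ v₁ u₂ v₂ u₃ v₃ k : R}
    (h₁ : u₁ * v₁ = k) (h₂ : u₂ * v₂ = k) (h₃ : u₃ * v₃ = k) :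
    k ∣ (u₁ - u₂) * (v₁ - v₂) * ((u₂ - u₃) * (v₂ - v₃)) * ((u₃ - u₁) * (v₃ - v₁)) := by
  set det := (u₂ - u₁) * (v₃ - v₁) - (u₃ - u₁) * (v₂ - v₁)
  have cramer_u : u₁ * det = (u₂ - u₁) * (u₃ - u₁) * (v₂ - v₃) := by
    linear_combination (u₂ - u₁) * (h₃ - h₁) - (u₃ - u₁) * (h₂ - h₁)
  have cramer_v : v₁ * det = (v₂ - v₁) * (v₃ - v₁) * (u₃ - u₂) := by
    linear_combination (v₃ - v₁) * (h₂ - h₁) - (v₂ - v₁) * (h₃ - h₁)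
  refine ⟨-det ^ 2, ?_⟩
  calc _ = -((u₁ * det) * (v₁ * det)) := by rw [cramer_u, cramer_v]; ring
    _ = k * -det ^ 2 := by linear_combination -det ^ 2 * h₁

section LatticePoints

open Metric

-- The metric on `ℤ × ℤ` is the sup metric: these balls are squares, which contain the Euclidean
-- discs of the same radius.
theorem finite_closedBall_prod_int (c : ℤ × ℤ) (R : ℝ) : (closedBall c R).Finite :=
  (isCompact_closedBall c R).finite_of_discrete

theorem ncard_closedBall_int_le (c : ℤ) {R : ℝ} (hR : 1 ≤ R) :
    ((closedBall c R).ncard : ℝ) ≤ 3 * R := by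
  rw [Int.closedBall_eq_Icc, ← Finset.coe_Icc, Set.ncard_coe_finset, Int.card_Icc,
    ← Int.cast_natCast, Int.ofNat_toNat, Int.cast_max]
  refine max_le ?_ (by push_cast; linarith)
  push_cast
  linarith [Int.floor_le ((c : ℝ) + R), Int.le_ceil ((c : ℝ) - R)]

theorem finite_closedBall_prod_closedBall_int (a b : ℤ) (A B : ℝ) :
    (closedBall a A ×ˢ closedBall b B).Finite :=
  ((isCompact_closedBall a A).prod (isCompact_closedBall b B)).finite_of_discrete

theorem ncard_closedBall_prod_closedBall_int_le (a b : ℤ) {A B : ℝ} (hA : 1 ≤ A) (hB : 1 ≤ B) :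
    ((closedBall a A ×ˢ closedBall b B).ncard : ℝ) ≤ 9 * (A * B) := by
  rw [Set.ncard_prod, Nat.cast_mul]
  calc _ ≤ 3 * A * (3 * B) := by
        gcongr
        exacts [ncard_closedBall_int_le a hA, ncard_closedBall_int_le b hB]
    _ = 9 * (A * B) := by ring

theorem ncard_closedBall_prod_int_le (c : ℤ × ℤ) {R : ℝ} (hR : 1 ≤ R) :
    ((closedBall c R).ncard : ℝ) ≤ 9 * R ^ 2 := by
  rw [← closedBall_prod_same, sq]
  exact ncard_closedBall_prod_closedBall_int_le _ _ hR hR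

theorem abs_intCast_sub_le_of_mem_closedBall {c x y : ℤ} {R : ℝ} (hx : x ∈ closedBall c R)
    (hy : y ∈ closedBall c R) : |((x - y : ℤ) : ℝ)| ≤ 2 * R := by
  rw [Int.cast_sub, ← Int.dist_eq, two_mul]
  exact (dist_triangle_right x y c).trans (add_le_add hx hy)

theorem le_max_mul_rpow_of_two_lt_imp {x C B R k ε : ℝ} (hC : 0 ≤ C) (hB : 0 ≤ B) (hR : 1 ≤ R)
    (hk : 0 ≤ k) (hε : 0 ≤ ε) {j : ℕ} (hj : j ≠ 0)
    (hx : 2 < x → x ≤ C * k ^ (ε / j) ∧ k ≤ (B * R) ^ j) : x ≤ max 2 (C * B ^ ε) * R ^ ε := by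
  have hR0 : 0 ≤ R := zero_le_one.trans hR
  obtain hx2 | hx2 := le_or_gt x 2
  · calc x ≤ 2 * 1 := by linarith
      _ ≤ _ := by
        gcongr
        exacts [le_max_left _ _, Real.one_le_rpow hR hε]
  · obtain ⟨hxk, hkR⟩ := hx hx2
    calc x ≤ C * ((B * R) ^ j) ^ (ε / j) := hxk.trans (by gcongr)
      _ = C * B ^ ε * R ^ ε := by
        rw [← Real.rpow_natCast, ← Real.rpow_mul (by positivity),
          mul_div_cancel₀ _ (Nat.cast_ne_zero.2 hj), Real.mul_rpow hB hR0, mul_assoc]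
      _ ≤ _ := by gcongr; exact le_max_right _ _

theorem sub_mul_sub_ne_zero_of_mul_eq {R : Type*} [CommRing R] [IsDomain R] {k : R} (hk : k ≠ 0)
    {p q : R × R} (hp : p.1 * p.2 = k) (hq : q.1 * q.2 = k) (hpq : p ≠ q) :
    (p.1 - q.1) * (p.2 - q.2) ≠ 0 := by
  have hp1 : p.1 ≠ 0 := left_ne_zero_of_mul (hp ▸ hk)
  have hp2 : p.2 ≠ 0 := right_ne_zero_of_mul (hp ▸ hk)
  rw [mul_ne_zero_iff, sub_ne_zero, sub_ne_zero]
  refine ⟨fun h => hpq (Prod.ext h ?_), fun h => hpq (Prod.ext ?_ h)⟩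
  · exact mul_left_cancel₀ hp1 (by rw [hp, h, hq])
  · exact mul_right_cancel₀ hp2 (by rw [hp, h, hq])

theorem abs_le_pow_three_of_two_lt_ncard_hyperbola {k : ℤ} (hk : k ≠ 0) {a b : ℤ} {A B : ℝ}
    (h : 2 < ({p : ℤ × ℤ | p.1 * p.2 = k} ∩ closedBall a A ×ˢ closedBall b B).ncard) :
    |(k : ℝ)| ≤ (4 * (A * B)) ^ 3 := by
  obtain ⟨p, ⟨hp, hpA, hpB⟩, q, ⟨hq, hqA, hqB⟩, r, ⟨hr, hrA, hrB⟩, hpq, hpr, hqr⟩ :=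
    (Set.two_lt_ncard (Set.finite_of_ncard_pos (by lia))).1 h
  have diff_le {x y : ℤ × ℤ} (hxA : x.1 ∈ closedBall a A) (hxB : x.2 ∈ closedBall b B)
      (hyA : y.1 ∈ closedBall a A) (hyB : y.2 ∈ closedBall b B) :
      |(((x.1 - y.1) * (x.2 - y.2) : ℤ) : ℝ)| ≤ 4 * (A * B) := by
    have hx := abs_intCast_sub_le_of_mem_closedBall hxA hyA
    have hy := abs_intCast_sub_le_of_mem_closedBall hxB hyB
    rw [Int.cast_mul, abs_mul]
    calc _ ≤ 2 * A * (2 * B) := mul_le_mul hx hy (abs_nonneg _) ((abs_nonneg _).trans hx)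
      _ = 4 * (A * B) := by ring
  have hle := Int.le_of_dvd (abs_pos.2 (mul_ne_zero (mul_ne_zero
      (sub_mul_sub_ne_zero_of_mul_eq hk hp hq hpq) (sub_mul_sub_ne_zero_of_mul_eq hk hq hr hqr))
      (sub_mul_sub_ne_zero_of_mul_eq hk hr hp hpr.symm)))
    ((abs_dvd_abs _ _).2 (dvd_prod_sub_of_mul_eq hp hq hr))
  have hle' := (Int.cast_le (R := ℝ)).2 hle
  rw [abs_mul, abs_mul, Int.cast_mul, Int.cast_mul] at hle'
  simp only [Int.cast_abs] at hle'
  have hdiff0 := (abs_nonneg _).trans (diff_le hpA hpB hqA hqB)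
  refine hle'.trans ?_
  rw [pow_succ, sq]
  gcongr
  exacts [diff_le hpA hpB hqA hqB, diff_le hqA hqB hrA hrB, diff_le hrA hrB hpA hpB]

theorem card_int_divisorsAntidiag (k : ℤ) :
    k.divisorsAntidiag.card = 2 * k.natAbs.divisors.card := by
  rcases k with n | n <;>
    simp [Int.divisorsAntidiag, two_mul, ← Nat.map_div_right_divisors, -Finset.disjUnion_eq_union]

theorem exists_ncard_hyperbola_inter_le {ε : ℝ} (hε : 0 < ε) :
    ∃ C : ℝ, 0 < C ∧ ∀ k : ℤ, k ≠ 0 → ∀ (a b : ℤ) (A B : ℝ), 1 ≤ A → 1 ≤ B →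
      (({p : ℤ × ℤ | p.1 * p.2 = k} ∩ closedBall a A ×ˢ closedBall b B).ncard : ℝ) ≤
        C * (A * B) ^ ε := by
  obtain ⟨C, hC0, hC⟩ := exists_card_divisors_le_mul_rpow (ε := ε / (3 : ℕ)) (by positivity)
  refine ⟨max 2 (2 * C * 4 ^ ε), by positivity, fun k hk a b A B hA hB => ?_⟩
  refine le_max_mul_rpow_of_two_lt_imp (by positivity) (by positivity)
    (one_le_mul_of_one_le_of_one_le hA hB) (abs_nonneg (k : ℝ)) hε.le three_ne_zero
    fun h => ⟨?_, ?_⟩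
  · have hsub : {p : ℤ × ℤ | p.1 * p.2 = k} ∩ closedBall a A ×ˢ closedBall b B ⊆
        k.divisorsAntidiag := fun p hp => Finset.mem_coe.2 (Int.mem_divisorsAntidiag.2 ⟨hp.1, hk⟩)
    have hcard := Set.ncard_le_ncard hsub
    rw [Set.ncard_coe_finset, card_int_divisorsAntidiag] at hcard
    calc _ ≤ 2 * (k.natAbs.divisors.card : ℝ) := by exact_mod_cast hcard
      _ ≤ 2 * (C * (k.natAbs : ℝ) ^ (ε / (3 : ℕ))) := by
        gcongr; exact hC _ (Int.natAbs_ne_zero.2 hk)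
      _ = _ := by rw [Nat.cast_natAbs, Int.cast_abs, mul_assoc]
  · exact abs_le_pow_three_of_two_lt_ncard_hyperbola hk (by exact_mod_cast h)

theorem norm_mk_eq_nsq (p : ℤ × ℤ) : (⟨p.1, p.2⟩ : GaussianInt).norm = nsq p := by
  rw [Zsqrtd.norm_def, nsq]; ring

theorem nsq_pos {p : ℤ × ℤ} (hp : p ≠ 0) : 0 < nsq p := by
  rw [nsq]
  by_contra! h
  exact hp (Prod.ext (by simpa using (show p.1 ^ 2 = 0 by nlinarith [sq_nonneg p.1, sq_nonneg p.2]))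
    (by simpa using (show p.2 ^ 2 = 0 by nlinarith [sq_nonneg p.1, sq_nonneg p.2])))

theorem dvd_prod_nsq_sub_of_nsq_eq {p q r : ℤ × ℤ} {k : ℤ} (hp : nsq p = k) (hq : nsq q = k)
    (hr : nsq r = k) : k ∣ nsq (p - q) * nsq (q - r) * nsq (r - p) := by
  have mul_star_eq {x : ℤ × ℤ} (hx : nsq x = k) :
      (⟨x.1, x.2⟩ : GaussianInt) * star ⟨x.1, x.2⟩ = (k : GaussianInt) := by
    rw [← Zsqrtd.norm_eq_mul_conj, norm_mk_eq_nsq, hx]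
  have h := dvd_prod_sub_of_mul_eq (mul_star_eq hp) (mul_star_eq hq) (mul_star_eq hr)
  simp only [← star_sub, ← Zsqrtd.norm_eq_mul_conj] at h
  rw [← Zsqrtd.intCast_dvd_intCast (d := -1)]
  simp only [← norm_mk_eq_nsq]
  exact_mod_cast h

theorem nsq_sub_le_of_mem_closedBall {c p q : ℤ × ℤ} {R : ℝ} (hp : p ∈ closedBall c R)
    (hq : q ∈ closedBall c R) : (nsq (p - q) : ℝ) ≤ (3 * R) ^ 2 := by
  rw [← closedBall_prod_same] at hp hq
  have h₁ := sq_le_sq.2 ((abs_intCast_sub_le_of_mem_closedBall hp.1 hq.1).trans (le_abs_self _))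
  have h₂ := sq_le_sq.2 ((abs_intCast_sub_le_of_mem_closedBall hp.2 hq.2).trans (le_abs_self _))
  simp only [nsq, Int.cast_add, Int.cast_pow, Prod.fst_sub, Prod.snd_sub]
  linarith [sq_nonneg R]

theorem le_pow_six_of_two_lt_ncard_circle {k : ℤ} {c : ℤ × ℤ} {R : ℝ}
    (h : 2 < ({p : ℤ × ℤ | nsq p = k} ∩ closedBall c R).ncard) :
    k ≠ 0 ∧ |(k : ℝ)| ≤ (3 * R) ^ 6 := by
  obtain ⟨p, ⟨hp, hpR⟩, q, ⟨hq, hqR⟩, r, ⟨hr, hrR⟩, hpq, hpr, hqr⟩ :=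
    (Set.two_lt_ncard (Set.finite_of_ncard_pos (by lia))).1 h
  have hpq0 := nsq_pos (sub_ne_zero.2 hpq)
  have hqr0 := nsq_pos (sub_ne_zero.2 hqr)
  have hrp0 := nsq_pos (sub_ne_zero.2 hpr.symm)
  have hprod := mul_pos (mul_pos hpq0 hqr0) hrp0
  have hdvd := dvd_prod_nsq_sub_of_nsq_eq hp hq hr
  refine ⟨ne_zero_of_dvd_ne_zero hprod.ne' hdvd, ?_⟩
  calc |(k : ℝ)| ≤ nsq (p - q) * nsq (q - r) * nsq (r - p) := by
        exact_mod_cast Int.le_of_dvd hprod ((abs_dvd k _).2 hdvd)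
    _ ≤ (3 * R) ^ 2 * (3 * R) ^ 2 * (3 * R) ^ 2 := by
        gcongr
        exacts [nsq_sub_le_of_mem_closedBall hpR hqR, nsq_sub_le_of_mem_closedBall hqR hrR,
          nsq_sub_le_of_mem_closedBall hrR hpR]
    _ = (3 * R) ^ 6 := by ring

theorem ncard_circle_inter_le (k : ℤ) (s : Set (ℤ × ℤ)) :
    ({p : ℤ × ℤ | nsq p = k} ∩ s).ncard ≤ (gaussianCircle k.natAbs).ncard := by
  refine Set.ncard_le_ncard_of_injOn (fun p : ℤ × ℤ => (⟨p.1, p.2⟩ : GaussianInt))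
    (fun p hp => ?_) (fun p _ q _ h => ?_) (finite_gaussianCircle _)
  · obtain rfl : nsq p = k := hp.1
    rw [← norm_mk_eq_nsq]
    exact (GaussianInt.natCast_natAbs_norm _).symm
  · exact Prod.ext (congrArg Zsqrtd.re h) (congrArg Zsqrtd.im h)

theorem exists_ncard_circle_inter_le {ε : ℝ} (hε : 0 < ε) :
    ∃ C : ℝ, 0 < C ∧ ∀ (k : ℤ) (c : ℤ × ℤ) (R : ℝ), 1 ≤ R →
      (({p : ℤ × ℤ | nsq p = k} ∩ closedBall c R).ncard : ℝ) ≤ C * R ^ ε := by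
  obtain ⟨C, hC0, hC⟩ := exists_ncard_gaussianCircle_le_mul_rpow (ε := ε / (6 : ℕ)) (by positivity)
  refine ⟨max 2 (C * 3 ^ ε), by positivity, fun k c R hR => ?_⟩
  refine le_max_mul_rpow_of_two_lt_imp hC0.le (by positivity) hR (abs_nonneg (k : ℝ)) hε.le
    (j := 6) (by norm_num) fun h => ?_
  obtain ⟨hk0, hkR⟩ := le_pow_six_of_two_lt_ncard_circle (by exact_mod_cast h)
  have hcard := (Nat.cast_le (α := ℝ)).2 (ncard_circle_inter_le k (closedBall c R))
  have hdiv := hC _ (Int.natAbs_ne_zero.2 hk0)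
  rw [Nat.cast_natAbs, Int.cast_abs] at hdiv
  exact ⟨hcard.trans hdiv, hkR⟩

theorem ncard_le_mul_ncard_of_fiber {α β γ : Type*} {s : Set α} {t : Set β} (ht : t.Finite)
    {U : β → Set γ} (hU : ∀ b ∈ t, (U b).Finite) {K : ℝ} (hK : ∀ b ∈ t, ((U b).ncard : ℝ) ≤ K)
    (f : α → β) (g : α → γ) (hf : ∀ a ∈ s, f a ∈ t) (hg : ∀ a ∈ s, g a ∈ U (f a))
    (hinj : s.InjOn fun a => (f a, g a)) : (s.ncard : ℝ) ≤ K * t.ncard := by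
  lift t to Finset β using ht
  have hfin : (⋃ b ∈ t, {b} ×ˢ U b).Finite :=
    t.finite_toSet.biUnion fun b hb => (Set.finite_singleton _).prod (hU b hb)
  have hle : s.ncard ≤ ∑ b ∈ t, (U b).ncard := by
    refine (Set.ncard_le_ncard_of_injOn _ (fun a ha => ?_) hinj hfin).trans
      ((Finset.set_ncard_biUnion_le t _).trans_eq (Finset.sum_congr rfl fun _ _ => ?_))
    · exact Set.mem_iUnion₂.2 ⟨f a, hf a ha, rfl, hg a ha⟩
    · rw [Set.ncard_prod, Set.ncard_singleton, one_mul]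
  calc (s.ncard : ℝ) ≤ ∑ b ∈ t, ((U b).ncard : ℝ) := by exact_mod_cast hle
    _ ≤ ∑ _b ∈ t, K := Finset.sum_le_sum hK
    _ = K * (t : Set β).ncard := by
      rw [Finset.sum_const, nsmul_eq_mul, Set.ncard_coe_finset, mul_comm]

/-- The standard dot product on `ℤ²`, through which `phiFn` factors. -/
def zdot (a b : ℤ × ℤ) : ℤ := a.1 * b.1 + a.2 * b.2

theorem exists_ncard_zdot_eq_inter_le_of_mul_snd_ne_zero {ε : ℝ} (hε : 0 < ε) :
    ∃ C : ℝ, 0 < C ∧ ∀ (k : ℤ) (c d : ℤ × ℤ) (A B : ℝ), 1 ≤ A → 1 ≤ B →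
      (({q : (ℤ × ℤ) × (ℤ × ℤ) | q.1.2 * q.2.2 ≠ 0 ∧ zdot q.1 q.2 = k} ∩
        closedBall c A ×ˢ closedBall d B).ncard : ℝ) ≤ C * (A * B) ^ (1 + ε) := by
  obtain ⟨C, hC0, hC⟩ := exists_ncard_hyperbola_inter_le hε
  refine ⟨9 * C, by positivity, fun k c d A B hA hB => ?_⟩
  let t : Set (ℤ × ℤ) := {p | k - p.1 * p.2 ≠ 0} ∩ closedBall c.1 A ×ˢ closedBall d.1 B
  let U : ℤ × ℤ → Set (ℤ × ℤ) := fun p =>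
    {r | r.1 * r.2 = k - p.1 * p.2} ∩ closedBall c.2 A ×ˢ closedBall d.2 B
  have ht : (t.ncard : ℝ) ≤ 9 * (A * B) := (Nat.cast_le.2 (Set.ncard_le_ncard
    Set.inter_subset_right (finite_closedBall_prod_closedBall_int _ _ _ _))).trans
      (ncard_closedBall_prod_closedBall_int_le c.1 d.1 hA hB)
  refine (ncard_le_mul_ncard_of_fiber (t := t) (U := U) (K := C * (A * B) ^ ε)
    ((finite_closedBall_prod_closedBall_int _ _ _ _).inter_of_right _)
    (fun p _ => (finite_closedBall_prod_closedBall_int _ _ _ _).inter_of_right _)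
    (fun p hp => hC _ hp.1 c.2 d.2 A B hA hB)
    (fun q => (q.1.1, q.2.1)) (fun q => (q.1.2, q.2.2)) ?_ ?_ ?_).trans ?_
  · rintro q ⟨⟨hne, hq⟩, hqA, hqB⟩
    rw [← closedBall_prod_same] at hqA hqB
    exact ⟨(eq_sub_of_add_eq' hq).symm.trans_ne hne, hqA.1, hqB.1⟩
  · rintro q ⟨⟨-, hq⟩, hqA, hqB⟩
    rw [← closedBall_prod_same] at hqA hqB
    exact ⟨eq_sub_of_add_eq' hq, hqA.2, hqB.2⟩
  · intro q _ r _ h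
    simp only [Prod.mk.injEq] at h
    exact Prod.ext (Prod.ext h.1.1 h.2.1) (Prod.ext h.1.2 h.2.2)
  · calc _ ≤ C * (A * B) ^ ε * (9 * (A * B)) := by gcongr
      _ = 9 * C * (A * B) ^ (1 + ε) := by
        rw [Real.rpow_one_add' (by positivity) (by positivity)]; ring

theorem ncard_fst_eq_zero_snd_eq_zero_inter_le (c d : ℤ × ℤ) {A B : ℝ} (hA : 1 ≤ A)
    (hB : 1 ≤ B) : (({q : (ℤ × ℤ) × (ℤ × ℤ) | q.1.1 = 0 ∧ q.2.2 = 0} ∩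
      closedBall c A ×ˢ closedBall d B).ncard : ℝ) ≤ 9 * (A * B) := by
  refine le_trans (Nat.cast_le.2 ?_) (ncard_closedBall_prod_closedBall_int_le c.2 d.1 hA hB)
  refine Set.ncard_le_ncard_of_injOn (fun q => (q.1.2, q.2.1)) ?_ ?_
    (finite_closedBall_prod_closedBall_int _ _ _ _)
  · rintro q ⟨-, hqA, hqB⟩
    rw [← closedBall_prod_same] at hqA hqB
    exact ⟨hqA.2, hqB.1⟩
  · rintro q ⟨⟨hq₁, hq₂⟩, -⟩ r ⟨⟨hr₁, hr₂⟩, -⟩ h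
    simp only [Prod.mk.injEq] at h
    exact Prod.ext (Prod.ext (hq₁.trans hr₁.symm) h.1) (Prod.ext h.2 (hq₂.trans hr₂.symm))

theorem zdot_swap_swap (a b : ℤ × ℤ) : zdot a.swap b.swap = zdot a b :=
  add_comm _ _

-- If `a.1 * b.1 = 0` and `a.2 * b.2 = 0`, then `a` and `b` lie on different axes.
theorem mul_snd_ne_zero_or_of_ne_zero {a b : ℤ × ℤ} (ha : a ≠ 0) (hb : b ≠ 0) :
    (a.2 * b.2 ≠ 0 ∨ a.1 = 0 ∧ b.2 = 0) ∨
      (a.swap.2 * b.swap.2 ≠ 0 ∨ a.swap.1 = 0 ∧ b.swap.2 = 0) := by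
  simp only [ne_eq, Prod.ext_iff, Prod.fst_zero, Prod.snd_zero] at ha hb
  simp only [Prod.fst_swap, Prod.snd_swap, ne_eq, mul_eq_zero]
  tauto

theorem exists_ncard_zdot_eq_inter_le_of_mul_snd_ne_zero_or {ε : ℝ} (hε : 0 < ε) :
    ∃ C : ℝ, 0 < C ∧ ∀ (k : ℤ) (c d : ℤ × ℤ) (A B : ℝ), 1 ≤ A → 1 ≤ B →
      (({q : (ℤ × ℤ) × (ℤ × ℤ) | (q.1.2 * q.2.2 ≠ 0 ∨ q.1.1 = 0 ∧ q.2.2 = 0) ∧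
        zdot q.1 q.2 = k} ∩ closedBall c A ×ˢ closedBall d B).ncard : ℝ) ≤
          C * (A * B) ^ (1 + ε) := by
  obtain ⟨C, hC0, hC⟩ := exists_ncard_zdot_eq_inter_le_of_mul_snd_ne_zero hε
  refine ⟨C + 9, by positivity, fun k c d A B hA hB => ?_⟩
  have hbox := (finite_closedBall_prod_int c A).prod (finite_closedBall_prod_int d B)
  have hsub : {q : (ℤ × ℤ) × (ℤ × ℤ) | (q.1.2 * q.2.2 ≠ 0 ∨ q.1.1 = 0 ∧ q.2.2 = 0) ∧
      zdot q.1 q.2 = k} ∩ closedBall c A ×ˢ closedBall d B ⊆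
        {q | q.1.2 * q.2.2 ≠ 0 ∧ zdot q.1 q.2 = k} ∩ closedBall c A ×ˢ closedBall d B ∪
          {q | q.1.1 = 0 ∧ q.2.2 = 0} ∩ closedBall c A ×ˢ closedBall d B :=
    fun q hq => hq.1.1.imp (fun h => ⟨⟨h, hq.1.2⟩, hq.2⟩) (fun h => ⟨h, hq.2⟩)
  have hle := (Set.ncard_le_ncard hsub
    ((hbox.inter_of_right _).union (hbox.inter_of_right _))).trans (Set.ncard_union_le _ _)
  have hAB : A * B ≤ (A * B) ^ (1 + ε) :=
    Real.self_le_rpow_of_one_le (one_le_mul_of_one_le_of_one_le hA hB) (by linarith)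
  calc _ ≤ (_ : ℝ) + _ := by exact_mod_cast hle
    _ ≤ C * (A * B) ^ (1 + ε) + 9 * (A * B) :=
      add_le_add (hC k c d A B hA hB) (ncard_fst_eq_zero_snd_eq_zero_inter_le c d hA hB)
    _ ≤ (C + 9) * (A * B) ^ (1 + ε) := by linarith

theorem exists_ncard_zdot_eq_inter_le {ε : ℝ} (hε : 0 < ε) :
    ∃ C : ℝ, 0 < C ∧ ∀ (k : ℤ) (c d : ℤ × ℤ) (A B : ℝ), 1 ≤ A → 1 ≤ B →
      (({q : (ℤ × ℤ) × (ℤ × ℤ) | q.1 ≠ 0 ∧ q.2 ≠ 0 ∧ zdot q.1 q.2 = k} ∩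
        closedBall c A ×ˢ closedBall d B).ncard : ℝ) ≤ C * (A * B) ^ (1 + ε) := by
  obtain ⟨C, hC0, hC⟩ := exists_ncard_zdot_eq_inter_le_of_mul_snd_ne_zero_or hε
  refine ⟨2 * C, by positivity, fun k c d A B hA hB => ?_⟩
  let E (c d : ℤ × ℤ) : Set ((ℤ × ℤ) × (ℤ × ℤ)) :=
    {q | (q.1.2 * q.2.2 ≠ 0 ∨ q.1.1 = 0 ∧ q.2.2 = 0) ∧ zdot q.1 q.2 = k} ∩
      closedBall c A ×ˢ closedBall d B
  have hE (c d : ℤ × ℤ) : (E c d).Finite :=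
    ((finite_closedBall_prod_int c A).prod (finite_closedBall_prod_int d B)).inter_of_right _
  have hsub : {q : (ℤ × ℤ) × (ℤ × ℤ) | q.1 ≠ 0 ∧ q.2 ≠ 0 ∧ zdot q.1 q.2 = k} ∩
      closedBall c A ×ˢ closedBall d B ⊆
        E c d ∪ Prod.map Prod.swap Prod.swap '' E c.swap d.swap := by
    rintro ⟨a, b⟩ ⟨⟨ha, hb, hk⟩, haA, hbB⟩
    obtain h | h := mul_snd_ne_zero_or_of_ne_zero ha hb
    · exact Or.inl ⟨⟨h, hk⟩, haA, hbB⟩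
    · rw [← closedBall_prod_same] at haA hbB
      refine Or.inr ⟨(a.swap, b.swap), ⟨⟨h, (zdot_swap_swap a b).trans hk⟩, ?_⟩, rfl⟩
      rw [← closedBall_prod_same, ← closedBall_prod_same]
      exact ⟨haA.symm, hbB.symm⟩
  have hle := (Set.ncard_le_ncard hsub ((hE c d).union ((hE _ _).image _))).trans
    ((Set.ncard_union_le _ _).trans
      (Nat.add_le_add_left (Set.ncard_image_le (hE c.swap d.swap)) _))
  calc _ ≤ ((E c d).ncard : ℝ) + (E c.swap d.swap).ncard := by exact_mod_cast hle
    _ ≤ 2 * C * (A * B) ^ (1 + ε) := by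
      linarith [hC k c d A B hA hB, hC k c.swap d.swap A B hA hB]

theorem nsq_add (a b : ℤ × ℤ) : nsq (a + b) = nsq (a - b) + 4 * zdot a b := by
  simp only [nsq, zdot, Prod.fst_add, Prod.snd_add, Prod.fst_sub, Prod.snd_sub]; ring

theorem phiFn_eq_two_mul_zdot {n n₁ n₂ n₃ : ℤ × ℤ} (h : n = n₁ - n₂ + n₃) :
    phiFn n n₁ n₂ n₃ = 2 * zdot (n - n₁) (n - n₃) := by
  obtain rfl : n₂ = n₁ + n₃ - n := by rw [h]; abel
  simp only [phiFn, nsq, zdot, Prod.fst_add, Prod.snd_add, Prod.fst_sub, Prod.snd_sub]; ring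

/-- The quadruples `(n, n₁, n₂, n₃)` with `n = n₁ - n₂ + n₃`, `n ≠ n₁`, `n ≠ n₃` and
`phiFn n n₁ n₂ n₃ = m` whose entries lie in `A`, `A₁`, `A₂`, `A₃` respectively: the set
`S^{𝐍,(m)}` with arbitrary sets in place of the dyadic shells. -/
def resonantSet (A A₁ A₂ A₃ : Set (ℤ × ℤ)) (m : ℤ) :
    Set ((ℤ × ℤ) × (ℤ × ℤ) × (ℤ × ℤ) × (ℤ × ℤ)) :=
  {q | q.1 = q.2.1 - q.2.2.1 + q.2.2.2 ∧ q.1 ≠ q.2.1 ∧ q.1 ≠ q.2.2.2 ∧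
    phiFn q.1 q.2.1 q.2.2.1 q.2.2.2 = m} ∩ A ×ˢ A₁ ×ˢ A₂ ×ˢ A₃

section ResonantSet

variable {A A₁ A₂ A₃ : Set (ℤ × ℤ)} {m : ℤ}

theorem mem_resonantSet {n n₁ n₂ n₃ : ℤ × ℤ} : (n, n₁, n₂, n₃) ∈ resonantSet A A₁ A₂ A₃ m ↔
    (n = n₁ - n₂ + n₃ ∧ n ≠ n₁ ∧ n ≠ n₃ ∧ phiFn n n₁ n₂ n₃ = m) ∧
      n ∈ A ∧ n₁ ∈ A₁ ∧ n₂ ∈ A₂ ∧ n₃ ∈ A₃ :=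
  Iff.rfl

theorem finite_resonantSet (hA : A.Finite) (hA₁ : A₁.Finite) (hA₂ : A₂.Finite)
    (hA₃ : A₃.Finite) : (resonantSet A A₁ A₂ A₃ m).Finite :=
  (hA.prod (hA₁.prod (hA₂.prod hA₃))).inter_of_right _

theorem two_mul_zdot_eq_of_mem_resonantSet {q : (ℤ × ℤ) × (ℤ × ℤ) × (ℤ × ℤ) × (ℤ × ℤ)}
    (hq : q ∈ resonantSet A A₁ A₂ A₃ m) : 2 * zdot (q.1 - q.2.1) (q.1 - q.2.2.2) = m :=
  (phiFn_eq_two_mul_zdot hq.1.1).symm.trans hq.1.2.2.2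

theorem eq_of_mem_resonantSet {q r : (ℤ × ℤ) × (ℤ × ℤ) × (ℤ × ℤ) × (ℤ × ℤ)}
    (hq : q ∈ resonantSet A A₁ A₂ A₃ m) (hr : r ∈ resonantSet A A₁ A₂ A₃ m) (h : q.1 = r.1)
    (h₁ : q.2.1 = r.2.1) (h₃ : q.2.2.2 = r.2.2.2) : q = r := by
  have h₂ : q.2.2.1 = r.2.2.1 := by
    have hqr := hq.1.1.symm.trans (h.trans hr.1.1)
    rwa [h₁, h₃, add_left_inj, sub_right_inj] at hqr
  exact Prod.ext h (Prod.ext h₁ (Prod.ext h₂ h₃))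

theorem mem_resonantSet_swap_zero_two {n n₁ n₂ n₃ : ℤ × ℤ}
    (h : (n, n₁, n₂, n₃) ∈ resonantSet A A₁ A₂ A₃ m) :
    (n₂, n₁, n, n₃) ∈ resonantSet A₂ A₁ A A₃ m := by
  obtain ⟨⟨hn, h₁, h₃, rfl⟩, hA, hA₁, hA₂, hA₃⟩ := mem_resonantSet.1 h
  refine mem_resonantSet.2 ⟨⟨?_, ?_, ?_, ?_⟩, hA₂, hA₁, hA, hA₃⟩
  · rw [hn]; abel
  · rintro rfl; exact h₃ (by rw [hn, sub_self, zero_add])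
  · rintro rfl; exact h₁ (by rw [hn, sub_add_cancel])
  · simp only [phiFn]; ring

theorem mem_resonantSet_swap_pairs {n n₁ n₂ n₃ : ℤ × ℤ}
    (h : (n, n₁, n₂, n₃) ∈ resonantSet A A₁ A₂ A₃ m) :
    (n₁, n, n₃, n₂) ∈ resonantSet A₁ A A₃ A₂ (-m) := by
  obtain ⟨⟨hn, h₁, h₃, rfl⟩, hA, hA₁, hA₂, hA₃⟩ := mem_resonantSet.1 h
  refine mem_resonantSet.2 ⟨⟨?_, h₁.symm, ?_, ?_⟩, hA₁, hA, hA₃, hA₂⟩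
  · rw [hn]; abel
  · rintro rfl; exact h₃ (by rw [hn, sub_self, zero_add])
  · simp only [phiFn]; ring

variable (A A₁ A₂ A₃ m)

theorem ncard_resonantSet_swap_zero_two :
    (resonantSet A₂ A₁ A A₃ m).ncard = (resonantSet A A₁ A₂ A₃ m).ncard :=
  Set.ncard_congr (fun q _ => (q.2.2.1, q.2.1, q.1, q.2.2.2))
    (fun _ hq => mem_resonantSet_swap_zero_two hq)
    (fun _ _ _ _ h => by simp only [Prod.mk.injEq] at h; grind)
    (fun _ hr => ⟨_, mem_resonantSet_swap_zero_two hr, rfl⟩)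

theorem ncard_resonantSet_swap_pairs :
    (resonantSet A₁ A A₃ A₂ (-m)).ncard = (resonantSet A A₁ A₂ A₃ m).ncard :=
  Set.ncard_congr (fun q _ => (q.2.1, q.1, q.2.2.2, q.2.2.1))
    (fun _ hq => neg_neg m ▸ mem_resonantSet_swap_pairs hq)
    (fun _ _ _ _ h => by simp only [Prod.mk.injEq] at h; grind)
    (fun _ hr => ⟨_, mem_resonantSet_swap_pairs hr, rfl⟩)

end ResonantSet

theorem exists_ncard_resonantSet_le_rpow_mul_ncard_mul_ncard {ε : ℝ} (hε : 0 < ε) :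
    ∃ C : ℝ, 0 < C ∧ ∀ (c : ℤ × ℤ) (N : ℝ), 1 ≤ N → ∀ A₁ A₂ A₃ : Set (ℤ × ℤ), A₁.Finite →
      A₃.Finite → ∀ m : ℤ, ((resonantSet (closedBall c N) A₁ A₂ A₃ m).ncard : ℝ) ≤
        C * N ^ ε * (A₁.ncard * A₃.ncard) := by
  obtain ⟨C, hC0, hC⟩ := exists_ncard_circle_inter_le hε
  refine ⟨C * 2 ^ ε, by positivity, fun c N hN A₁ A₂ A₃ hA₁ hA₃ m => ?_⟩
  rw [← Nat.cast_mul, ← Set.ncard_prod, mul_assoc C, ← Real.mul_rpow two_pos.le (by positivity)]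
  let U : (ℤ × ℤ) × (ℤ × ℤ) → Set (ℤ × ℤ) := fun p =>
    {w | nsq w = nsq (p.2 - p.1) + 2 * m} ∩ closedBall ((c - p.1) + (c - p.2)) (2 * N)
  refine ncard_le_mul_ncard_of_fiber (hA₁.prod hA₃) (U := U)
    (fun p _ => (finite_closedBall_prod_int _ _).inter_of_right _)
    (fun p _ => hC _ _ _ (by linarith)) (fun q => (q.2.1, q.2.2.2))
    (fun q => (q.1 - q.2.1) + (q.1 - q.2.2.2)) (fun q hq => ⟨hq.2.2.1, hq.2.2.2.2⟩) ?_ ?_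
  · intro q hq
    refine ⟨?_, ?_⟩
    · have hdiff : (q.1 - q.2.1) - (q.1 - q.2.2.2) = q.2.2.2 - q.2.1 := by abel
      change nsq _ = _
      rw [nsq_add, hdiff, ← two_mul_zdot_eq_of_mem_resonantSet hq]
      ring
    · calc dist _ _ ≤ dist (q.1 - q.2.1) (c - q.2.1) + dist (q.1 - q.2.2.2) (c - q.2.2.2) :=
            dist_add_add_le _ _ _ _
        _ = 2 * dist q.1 c := by rw [dist_sub_right, dist_sub_right, two_mul]
        _ ≤ 2 * N := by gcongr; exact hq.2.1
  · intro q hq r hr h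
    simp only [Prod.mk.injEq] at h
    obtain ⟨⟨h₁, h₃⟩, hsum⟩ := h
    refine eq_of_mem_resonantSet hq hr ?_ h₁ h₃
    rw [h₁, h₃] at hsum
    rw [sub_add_sub_comm, sub_add_sub_comm, sub_left_inj, ← two_nsmul, ← two_nsmul] at hsum
    exact nsmul_right_injective two_ne_zero hsum

theorem exists_ncard_resonantSet_le_mul_rpow_mul_ncard {ε : ℝ} (hε : 0 < ε) :
    ∃ C : ℝ, 0 < C ∧ ∀ (c₁ c₃ : ℤ × ℤ) (N₁ N₃ : ℝ), 1 ≤ N₁ → 1 ≤ N₃ → ∀ A A₂ : Set (ℤ × ℤ),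
      A.Finite → ∀ m : ℤ,
        ((resonantSet A (closedBall c₁ N₁) A₂ (closedBall c₃ N₃) m).ncard : ℝ) ≤
          C * (N₁ * N₃) ^ (1 + ε) * A.ncard := by
  obtain ⟨C, hC0, hC⟩ := exists_ncard_zdot_eq_inter_le hε
  refine ⟨C, hC0, fun c₁ c₃ N₁ N₃ hN₁ hN₃ A A₂ hA m => ?_⟩
  let U : ℤ × ℤ → Set ((ℤ × ℤ) × (ℤ × ℤ)) := fun n =>
    {w | w.1 ≠ 0 ∧ w.2 ≠ 0 ∧ zdot w.1 w.2 = m / 2} ∩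
      closedBall (n - c₁) N₁ ×ˢ closedBall (n - c₃) N₃
  refine ncard_le_mul_ncard_of_fiber hA (U := U)
    (fun n _ => ((finite_closedBall_prod_int _ _).prod
      (finite_closedBall_prod_int _ _)).inter_of_right _)
    (fun n _ => hC _ _ _ _ _ hN₁ hN₃) (fun q => q.1)
    (fun q => (q.1 - q.2.1, q.1 - q.2.2.2)) (fun q hq => hq.2.1) ?_ ?_
  · rintro q hq
    have hdot := two_mul_zdot_eq_of_mem_resonantSet hq
    refine ⟨⟨sub_ne_zero.2 hq.1.2.1, sub_ne_zero.2 hq.1.2.2.1, by simp only; lia⟩, ?_, ?_⟩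
    · exact (dist_sub_left _ _ _).trans_le hq.2.2.1
    · exact (dist_sub_left _ _ _).trans_le hq.2.2.2.2
  · intro q hq r hr h
    simp only [Prod.mk.injEq] at h
    obtain ⟨h₀, h₁, h₃⟩ := h
    rw [h₀, sub_right_inj] at h₁ h₃
    exact eq_of_mem_resonantSet hq hr h₀ h₁ h₃

theorem exists_ncard_resonantSet_closedBall_le {ε : ℝ} (hε : 0 < ε) :
    ∃ C : ℝ, 0 < C ∧ ∀ (c c₁ c₃ : ℤ × ℤ) (N N₁ N₃ : ℝ), 1 ≤ N → 1 ≤ N₁ → 1 ≤ N₃ →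
      ∀ (A₂ : Set (ℤ × ℤ)) (m : ℤ), ((resonantSet (closedBall c N) (closedBall c₁ N₁) A₂
        (closedBall c₃ N₃) m).ncard : ℝ) ≤
          C * min (N₁ ^ 2 * N₃ ^ 2 * N ^ ε) (N ^ 2 * (N₁ * N₃) ^ (1 + ε)) := by
  obtain ⟨C, hC0, hC⟩ := exists_ncard_resonantSet_le_rpow_mul_ncard_mul_ncard hε
  obtain ⟨D, hD0, hD⟩ := exists_ncard_resonantSet_le_mul_rpow_mul_ncard hε
  refine ⟨max (81 * C) (9 * D), by positivity, fun c c₁ c₃ N N₁ N₃ hN hN₁ hN₃ A₂ m => ?_⟩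
  have hball (b : ℤ × ℤ) (R : ℝ) := finite_closedBall_prod_int b R
  rw [mul_min_of_nonneg _ _ (by positivity)]
  refine le_min ?_ ?_
  · calc _ ≤ C * N ^ ε * ((closedBall c₁ N₁).ncard * (closedBall c₃ N₃).ncard) :=
          hC c N hN _ A₂ _ (hball _ _) (hball _ _) m
      _ ≤ C * N ^ ε * (9 * N₁ ^ 2 * (9 * N₃ ^ 2)) := by
        gcongr
        exacts [ncard_closedBall_prod_int_le c₁ hN₁, ncard_closedBall_prod_int_le c₃ hN₃]
      _ = 81 * C * (N₁ ^ 2 * N₃ ^ 2 * N ^ ε) := by ring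
      _ ≤ _ := by gcongr; exact le_max_left _ _
  · calc _ ≤ D * (N₁ * N₃) ^ (1 + ε) * (closedBall c N).ncard :=
          hD c₁ c₃ N₁ N₃ hN₁ hN₃ _ A₂ (hball _ _) m
      _ ≤ D * (N₁ * N₃) ^ (1 + ε) * (9 * N ^ 2) := by
        gcongr
        exact ncard_closedBall_prod_int_le c hN
      _ = 9 * D * (N ^ 2 * (N₁ * N₃) ^ (1 + ε)) := by ring
      _ ≤ _ := by gcongr; exact le_max_right _ _

theorem exists_ncard_resonantSet_closedBall_le_min {ε : ℝ} (hε : 0 < ε) :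
    ∃ C : ℝ, 0 < C ∧ ∀ (c c₁ c₂ c₃ : ℤ × ℤ) (N N₁ N₂ N₃ : ℝ),
      1 ≤ N → 1 ≤ N₁ → 1 ≤ N₂ → 1 ≤ N₃ → ∀ m : ℤ,
      ((resonantSet (closedBall c N) (closedBall c₁ N₁) (closedBall c₂ N₂)
        (closedBall c₃ N₃) m).ncard : ℝ) ≤
          C * min (N₁ ^ 2 * N₃ ^ 2 * min N N₂ ^ ε) (min N N₂ ^ 2 * (N₁ * N₃) ^ (1 + ε)) := by
  obtain ⟨C, hC0, hC⟩ := exists_ncard_resonantSet_closedBall_le hε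
  refine ⟨C, hC0, fun c c₁ c₂ c₃ N N₁ N₂ N₃ hN hN₁ hN₂ hN₃ m => ?_⟩
  obtain h | h := le_total N N₂
  · rw [min_eq_left h]
    exact hC c c₁ c₃ N N₁ N₃ hN hN₁ hN₃ _ m
  · rw [min_eq_right h, ← ncard_resonantSet_swap_zero_two]
    exact hC c₂ c₁ c₃ N₂ N₁ N₃ hN₂ hN₁ hN₃ _ m

theorem stmt4_general {ε : ℝ} (hε : 0 < ε) :
    ∃ C : ℝ, 0 < C ∧ ∀ (c c₁ c₂ c₃ : ℤ × ℤ) (N N₁ N₂ N₃ : ℝ),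
      1 ≤ N → 1 ≤ N₁ → 1 ≤ N₂ → 1 ≤ N₃ → ∀ m : ℤ,
      ((resonantSet (closedBall c N) (closedBall c₁ N₁) (closedBall c₂ N₂)
        (closedBall c₃ N₃) m).ncard : ℝ) ≤
        C * min (min (N₁ ^ 2 * N₃ ^ 2 * (min N N₂) ^ ε) (N ^ 2 * N₂ ^ 2 * (min N₁ N₃) ^ ε))
                (min ((min N N₂) ^ 2 * (N₁ * N₃) ^ (1 + ε))
                     ((min N₁ N₃) ^ 2 * (N * N₂) ^ (1 + ε))) := by
  obtain ⟨C, hC0, hC⟩ := exists_ncard_resonantSet_closedBall_le_min hε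
  refine ⟨C, hC0, fun c c₁ c₂ c₃ N N₁ N₂ N₃ hN hN₁ hN₂ hN₃ m => ?_⟩
  have hswap := hC c₁ c c₃ c₂ N₁ N N₃ N₂ hN₁ hN hN₃ hN₂ (-m)
  rw [ncard_resonantSet_swap_pairs] at hswap
  rw [min_min_min_comm, mul_min_of_nonneg _ _ hC0.le]
  exact le_min (hC c c₁ c₂ c₃ N N₁ N₂ N₃ hN hN₁ hN₂ hN₃ m) hswap

theorem IsDyadic.one_le {N : ℝ} (hN : IsDyadic N) : 1 ≤ N := by
  obtain ⟨k, rfl⟩ := hN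
  exact one_le_pow₀ one_le_two

theorem simDyadic.mem_closedBall {N : ℝ} {n : ℤ × ℤ} (hn : simDyadic N n) :
    n ∈ closedBall 0 N := by
  have hnorm : znorm n ≤ N := by
    obtain ⟨rfl, h⟩ | ⟨-, -, h⟩ := hn <;> exact h
  rw [mem_closedBall_zero_iff, Prod.norm_def, Int.norm_eq_abs, Int.norm_eq_abs]
  refine (max_le (Real.abs_le_sqrt ?_) (Real.abs_le_sqrt ?_)).trans hnorm
  exacts [le_add_of_nonneg_right (sq_nonneg _), le_add_of_nonneg_left (sq_nonneg _)]

theorem ncard_setOf_SMem_le (N N₁ N₂ N₃ : ℝ) (m : ℤ) :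
    {q : (ℤ × ℤ) × (ℤ × ℤ) × (ℤ × ℤ) × (ℤ × ℤ) |
      SMem N N₁ N₂ N₃ m q.1 q.2.1 q.2.2.1 q.2.2.2}.ncard ≤
      (resonantSet (closedBall 0 N) (closedBall 0 N₁) (closedBall 0 N₂)
        (closedBall 0 N₃) m).ncard := by
  have hball (R : ℝ) := finite_closedBall_prod_int 0 R
  refine Set.ncard_le_ncard ?_ (finite_resonantSet (hball _) (hball _) (hball _) (hball _))
  rintro q ⟨hn, h₁, h₃, hm, hN, hN₁, hN₂, hN₃⟩
  exact ⟨⟨hn, h₁, h₃, hm⟩, hN.mem_closedBall, hN₁.mem_closedBall, hN₂.mem_closedBall,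
    hN₃.mem_closedBall⟩

end LatticePoints

theorem stmt4 (ε : ℝ) (hε : 0 < ε) :
    ∃ C : ℝ, 0 < C ∧ ∀ N N₁ N₂ N₃ : ℝ,
      IsDyadic N → IsDyadic N₁ → IsDyadic N₂ → IsDyadic N₃ → ∀ m : ℤ,
      (({q : (ℤ × ℤ) × (ℤ × ℤ) × (ℤ × ℤ) × (ℤ × ℤ) |
          SMem N N₁ N₂ N₃ m q.1 q.2.1 q.2.2.1 q.2.2.2}).ncard : ℝ) ≤
        C * min (min (N₁ ^ 2 * N₃ ^ 2 * (min N N₂) ^ ε) (N ^ 2 * N₂ ^ 2 * (min N₁ N₃) ^ ε))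
                (min ((min N N₂) ^ 2 * (N₁ * N₃) ^ (1 + ε))
                     ((min N₁ N₃) ^ 2 * (N * N₂) ^ (1 + ε))) := by
  obtain ⟨C, hC0, hC⟩ := stmt4_general hε
  exact ⟨C, hC0, fun N N₁ N₂ N₃ hN hN₁ hN₂ hN₃ m =>
    (Nat.cast_le.2 (ncard_setOf_SMem_le ..)).trans
      (hC 0 0 0 0 N N₁ N₂ N₃ hN.one_le hN₁.one_le hN₂.one_le hN₃.one_le m)⟩
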